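/- Let γ ∈ R^+ \ Δ satisfy ℓ(s_γ) = ⟨2ρ, γ^∨⟩ − 1. Then for every 1 ≤ j ≤ n with ⟨α_j, γ^∨⟩ > 0 one has ⟨α_j, γ^∨⟩ = 1; moreover, setting β := s_j(γ), one has β^∨ = γ^∨ − α_j^∨ and ℓ(s_β) = ℓ(s_γ) − 2 = ⟨2ρ, β^∨⟩ − 1. -/

import Mathlib

/-!
Put `k = ⟨α_j, γ^∨⟩ > 0` and `β = s_j(γ)`.  Then `β^∨ = γ^∨ - k α_j^∨`, and `⟨2ρ, α_j^∨⟩ = 2`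
because `s_j` permutes the positive roots other than `α_j`; hence
`⟨2ρ, β^∨⟩ = ⟨2ρ, γ^∨⟩ - 2k`.  Since `s_γ = s_j s_β s_j`, also `ℓ(s_γ) ≤ ℓ(s_β) + 2`.

The bound `ℓ(s_β) ≤ ⟨2ρ, β^∨⟩ - 1` holds for every positive root `β`, by descent along simple
reflections: a step `β ↦ s_i(β)` with `⟨α_i, β^∨⟩ > 0` lowers the right side by at least `2` and
the left side by at most `2`.  If `ℓ(s_γ) = ⟨2ρ, γ^∨⟩ - 1`, the chain
`⟨2ρ, γ^∨⟩ - 1 = ℓ(s_γ) ≤ ℓ(s_β) + 2 ≤ ⟨2ρ, γ^∨⟩ - 2k + 1` forces `k = 1` and both inequalities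
to be equalities.
-/

open scoped BigOperators

/-- A reduced crystallographic root system with a fixed base `α_1, …, α_n` of simple
roots, bundled with its Weyl group `W`.  A root `γ` is recorded by its integer
coordinate vector in the basis of simple roots (so the `i`-th simple root is
`Pi.single i 1`), and `cor γ` is the coordinate vector of the coroot `γ^∨` in the
basis of simple coroots (hence `cor γ i = ⟨χ_i, γ^∨⟩` for the fundamental weights
`χ_i`).  `A i j = ⟨α_i, α_j^∨⟩` is the Cartan matrix, `σ γ` is the reflection `s_γ`
and `act` is the action of the Weyl group on the root lattice. -/
structure RootSystemData (n : ℕ) where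
  A : Fin n → Fin n → ℤ
  R : Finset (Fin n → ℤ)
  cor : (Fin n → ℤ) → (Fin n → ℤ)
  W : Type
  [grp : Group W]
  σ : (Fin n → ℤ) → W
  act : W → (Fin n → ℤ) → (Fin n → ℤ)
  simple_mem : ∀ i : Fin n, (Pi.single i 1 : Fin n → ℤ) ∈ R
  root_ne_zero : ∀ γ ∈ R, γ ≠ 0
  neg_mem : ∀ γ ∈ R, -γ ∈ R
  pos_or_neg : ∀ γ ∈ R, (∀ i, 0 ≤ γ i) ∨ (∀ i, γ i ≤ 0)
  reduced : ∀ γ ∈ R, ∀ k : ℤ, k • γ ∈ R → k = 1 ∨ k = -1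
  cor_simple : ∀ i : Fin n, cor (Pi.single i 1) = Pi.single i 1
  cor_neg : ∀ γ ∈ R, cor (-γ) = -(cor γ)
  pair_self : ∀ γ ∈ R, (∑ i, ∑ j, γ i * A i j * cor γ j) = 2
  act_one : ∀ x, act 1 x = x
  act_mul : ∀ w w' x, act (w * w') x = act w (act w' x)
  act_refl : ∀ γ ∈ R, ∀ x, act (σ γ) x = x - (∑ i, ∑ j, x i * A i j * cor γ j) • γ
  act_mem : ∀ (w : W), ∀ γ ∈ R, act w γ ∈ R
  cor_refl : ∀ γ ∈ R, ∀ β ∈ R,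
    cor (act (σ γ) β) = cor β - (∑ i, ∑ j, γ i * A i j * cor β j) • cor γ
  refl_sq : ∀ γ ∈ R, σ γ * σ γ = 1
  refl_act : ∀ (w : W), ∀ γ ∈ R, σ (act w γ) = w * σ γ * w⁻¹
  act_faithful : ∀ w w' : W, (∀ γ ∈ R, act w γ = act w' γ) → w = w'
  generated : ∀ w : W, ∃ l : List (Fin n), w = (l.map fun i => σ (Pi.single i 1)).prod

namespace RootSystemData

instance {n : ℕ} (c : RootSystemData n) : Group c.W := c.grp

/-- the pairing `⟨x, λ⟩` between an element `x` of the root lattice (coordinates in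
the basis of simple roots) and an element `λ` of the coroot lattice (coordinates in
the basis of simple coroots) -/
def pair {n : ℕ} (c : RootSystemData n) (x lam : Fin n → ℤ) : ℤ :=
  ∑ i, ∑ j, x i * c.A i j * lam j

/-- the `i`-th simple root -/
def sroot {n : ℕ} (_c : RootSystemData n) (i : Fin n) : Fin n → ℤ := Pi.single i 1

/-- the simple reflection `s_i` -/
def s {n : ℕ} (c : RootSystemData n) (i : Fin n) : c.W := c.σ (c.sroot i)

/-- `s_{α_{t+1}}` for a `0`-based natural number index `t` (`= 1` when out of range) -/
def sN {n : ℕ} (c : RootSystemData n) (t : ℕ) : c.W := if h : t < n then c.s ⟨t, h⟩ else 1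

/-- `⟨2ρ, λ⟩ = Σ_{β ∈ R^+} ⟨β, λ⟩`, where `ρ` is the half-sum of the positive roots -/
def pairTwoRho {n : ℕ} (c : RootSystemData n) (lam : Fin n → ℤ) : ℤ :=
  ∑ β ∈ c.R, if ∀ i, 0 ≤ β i then c.pair β lam else 0

/-- the length of `w ∈ W` with respect to the simple reflections -/
noncomputable def len {n : ℕ} (c : RootSystemData n) (w : c.W) : ℕ :=
  sInf {k | ∃ l : List (Fin n), l.length = k ∧ (l.map c.s).prod = w}

/-- the parabolic subgroup `W_S` generated by the simple reflections indexed by `S` -/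
def Wsub {n : ℕ} (c : RootSystemData n) (S : Finset (Fin n)) : Subgroup c.W :=
  Subgroup.closure (c.s '' ↑S)

/-- `w ∈ W_T^S`: `w ∈ W_T` and `w` has minimal length in the coset `w W_S` -/
def MinRep {n : ℕ} (c : RootSystemData n) (T S : Finset (Fin n)) (w : c.W) : Prop :=
  w ∈ c.Wsub T ∧ ∀ u ∈ c.Wsub S, c.len w ≤ c.len (w * u)

/-- `w` is the longest element of `W_S` -/
def IsLongest {n : ℕ} (c : RootSystemData n) (S : Finset (Fin n)) (w : c.W) : Prop :=
  w ∈ c.Wsub S ∧ ∀ v ∈ c.Wsub S, c.len v ≤ c.len w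

end RootSystemData

/-- the support of `γ` is contained in `S`, i.e. `γ` lies in the span of
`{α_i : i ∈ S}` (for a root `γ`, membership in `R_S`) -/
def suppIn {n : ℕ} (S : Finset (Fin n)) (γ : Fin n → ℤ) : Prop :=
  ∀ i, i ∉ S → γ i = 0

/-- `Δ_j` for `0 ≤ j ≤ r+1`: the index set of the first `j` simple roots for `j ≤ r`,
and all of `Δ` for `j = r+1`.  (Indices of simple roots are `0`-based, so
`α_1, …, α_j` correspond to the indices `0, …, j-1`.) -/
def deltaSet (n r j : ℕ) : Finset (Fin n) :=
  if j = r + 1 then Finset.univ else Finset.univ.filter fun i => (i : ℕ) < j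

namespace RootSystemData

/-- `v 0, …, v r` (standing for `v_1, …, v_{r+1}`) is the decomposition of `w`
associated to `(Δ_P, Υ)`:  each `v_i ∈ W_{Δ_i}^{Δ_{i-1}}` and `w = v_{r+1} v_r ⋯ v_1`. -/
def IsDecomp {n : ℕ} (c : RootSystemData n) (r : ℕ) (w : c.W)
    (v : Fin (r + 1) → c.W) : Prop :=
  (∀ k : Fin (r + 1), c.MinRep (deltaSet n r ((k : ℕ) + 1)) (deltaSet n r (k : ℕ)) (v k)) ∧
    w = (List.ofFn v).reverse.prod

/-- the first `m` simple roots `α_1, …, α_m` form a path of type `A_m`: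
`⟨α_i, α_j^∨⟩ = -1` if `|i-j| = 1` and `⟨α_i, α_j^∨⟩ = 0` if `|i-j| ≥ 2`. -/
def PathA {n : ℕ} (c : RootSystemData n) (m : ℕ) : Prop :=
  ∀ i j : Fin n, (i : ℕ) < m → (j : ℕ) < m →
    (((i : ℕ) + 1 = (j : ℕ) ∨ (j : ℕ) + 1 = (i : ℕ)) → c.A i j = -1) ∧
    ((i : ℕ) + 2 ≤ (j : ℕ) ∨ (j : ℕ) + 2 ≤ (i : ℕ) → c.A i j = 0)

/-- `u_{[k,m]} = s_k s_{k+1} ⋯ s_m` (`1`-based indices; `u_{[k,m]} = 1` for `k > m`) -/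
def uu {n : ℕ} (c : RootSystemData n) (k m : ℕ) : c.W :=
  ((List.range' k (m + 1 - k)).map fun t => c.sN (t - 1)).prod

/-- `u_i^{(m)} = s_{m-i+1} s_{m-i+2} ⋯ s_m` -/
def uElt {n : ℕ} (c : RootSystemData n) (i m : ℕ) : c.W := c.uu (m - i + 1) m

end RootSystemData

/-- strict lexicographic order on `Fin m → ℤ` -/
def lexLT {m : ℕ} (x y : Fin m → ℤ) : Prop :=
  ∃ j, x j < y j ∧ ∀ k, k < j → x k = y k

/-- lexicographic order on `Fin m → ℤ` -/
def lexLE {m : ℕ} (x y : Fin m → ℤ) : Prop := x = y ∨ lexLT x y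

/-- the grading `gr(q_{α_{j+1}^∨}) ∈ ℤ^{r+1}` (for the `0`-based index `j < r`), when
`Δ_P` is of type `A_r`: in `1`-based terms, `gr(q_{α_1^∨}) = 2·e_1` and
`gr(q_{α_j^∨}) = (1-j)·e_{j-1} + (1+j)·e_j` for `2 ≤ j ≤ r`. -/
def grQ (r j : ℕ) : Fin (r + 1) → ℤ := fun k =>
  (if (k : ℕ) = j then (j : ℤ) + 2 else 0) + (if (k : ℕ) + 1 = j then -(j : ℤ) else 0)

/-- the grading `gr(q_λ)` for `λ ∈ Q_P^∨` (coordinates in simple coroots), extended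
additively from the `gr(q_{α_j^∨})`, when `Δ_P` is of type `A_r` -/
def grQlam (n r : ℕ) (lam : Fin n → ℤ) : Fin (r + 1) → ℤ :=
  fun k => ∑ j, lam j * grQ r (j : ℕ) k

namespace RootSystemData

variable {n : ℕ} (c : RootSystemData n)

/-- `pair` as a bilinear map, which makes the `map_*` lemmas available for it. -/
def pairing : (Fin n → ℤ) →ₗ[ℤ] (Fin n → ℤ) →ₗ[ℤ] ℤ :=
  Matrix.toLinearMap₂' ℤ (Matrix.of c.A)

lemma pairing_apply (x lam : Fin n → ℤ) : c.pairing x lam = c.pair x lam := by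
  simp [pairing, pair, Matrix.toLinearMap₂'_apply', dotProduct, Matrix.mulVec, Finset.mul_sum,
    mul_assoc]

lemma pair_eq_sum_sroot (x lam : Fin n → ℤ) :
    c.pair x lam = ∑ i, x i * c.pair (c.sroot i) lam := by
  conv_lhs => rw [pi_eq_sum_univ' x]
  simp only [sroot, ← pairing_apply, map_sum, map_smul, LinearMap.sum_apply, LinearMap.smul_apply,
    smul_eq_mul]

lemma exists_pair_sroot_pos {x lam : Fin n → ℤ} (hx : ∀ i, 0 ≤ x i) (h : 0 < c.pair x lam) :
    ∃ j, 0 < c.pair (c.sroot j) lam := by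
  by_contra! hle
  rw [pair_eq_sum_sroot] at h
  exact h.not_ge <| Finset.sum_nonpos fun i _ =>
    mul_nonpos_of_nonneg_of_nonpos (hx i) (hle i)

lemma sroot_mem (j : Fin n) : c.sroot j ∈ c.R := c.simple_mem j

lemma cor_sroot (j : Fin n) : c.cor (c.sroot j) = Pi.single j 1 := c.cor_simple j

section Reflection

variable {c} {γ β : Fin n → ℤ}

lemma pair_cor_self (hγ : γ ∈ c.R) : c.pair γ (c.cor γ) = 2 := c.pair_self γ hγ

lemma act_refl_eq_sub (hγ : γ ∈ c.R) (x : Fin n → ℤ) :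
    c.act (c.σ γ) x = x - c.pair x (c.cor γ) • γ :=
  c.act_refl γ hγ x

lemma cor_act_refl (hγ : γ ∈ c.R) (hβ : β ∈ c.R) :
    c.cor (c.act (c.σ γ) β) = c.cor β - c.pair γ (c.cor β) • c.cor γ :=
  c.cor_refl γ hγ β hβ

lemma act_refl_involutive (hγ : γ ∈ c.R) : Function.Involutive (c.act (c.σ γ)) := fun x => by
  rw [← c.act_mul, c.refl_sq γ hγ, c.act_one]

lemma act_refl_self (hγ : γ ∈ c.R) : c.act (c.σ γ) γ = -γ := by
  rw [act_refl_eq_sub hγ, pair_cor_self hγ]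
  module

lemma pair_act_refl_cor (hγ : γ ∈ c.R) (x : Fin n → ℤ) :
    c.pair (c.act (c.σ γ) x) (c.cor γ) = -c.pair x (c.cor γ) := by
  rw [act_refl_eq_sub hγ]
  simp only [← pairing_apply, map_sub, map_smul, LinearMap.sub_apply, LinearMap.smul_apply,
    smul_eq_mul]
  rw [c.pairing_apply γ, pair_cor_self hγ]
  ring

lemma refl_eq_conj (hγ : γ ∈ c.R) (hβ : β ∈ c.R) :
    c.σ β = c.σ γ * c.σ (c.act (c.σ γ) β) * c.σ γ := by
  have h := c.refl_act (c.σ γ) _ (c.act_mem (c.σ γ) β hβ)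
  rwa [act_refl_involutive hγ, inv_eq_of_mul_eq_one_left (c.refl_sq γ hγ)] at h

end Reflection

/-- The set `R^+` of positive roots. -/
def posRoots : Finset (Fin n → ℤ) := {β ∈ c.R | ∀ i, 0 ≤ β i}

section PosRoots

variable {c} {β : Fin n → ℤ}

lemma mem_posRoots : β ∈ c.posRoots ↔ β ∈ c.R ∧ ∀ i, 0 ≤ β i := Finset.mem_filter

lemma mem_of_mem_posRoots (hβ : β ∈ c.posRoots) : β ∈ c.R := (mem_posRoots.1 hβ).1

lemma nonneg_of_mem_posRoots (hβ : β ∈ c.posRoots) (i : Fin n) : 0 ≤ β i :=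
  (mem_posRoots.1 hβ).2 i

lemma mem_posRoots_of_apply_pos (hβ : β ∈ c.R) {i : Fin n} (hi : 0 < β i) : β ∈ c.posRoots :=
  mem_posRoots.2 ⟨hβ, (c.pos_or_neg β hβ).resolve_right fun hneg => hi.not_ge (hneg i)⟩

variable (c) in
lemma sroot_mem_posRoots (j : Fin n) : c.sroot j ∈ c.posRoots :=
  mem_posRoots_of_apply_pos (c.sroot_mem j) (i := j) (by simp [sroot])

lemma exists_ne_apply_pos_of_ne_sroot (hβ : β ∈ c.posRoots) {j : Fin n} (hne : β ≠ c.sroot j) :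
    ∃ i ≠ j, 0 < β i := by
  by_contra! hle
  have hmultiple : β = β j • c.sroot j := by
    funext i
    obtain rfl | hij := eq_or_ne i j
    · simp [sroot]
    · simp [sroot, hij, (hle i hij).antisymm (nonneg_of_mem_posRoots hβ i)]
  have hcoeff := c.reduced _ (c.sroot_mem j) (β j) (hmultiple ▸ mem_of_mem_posRoots hβ)
  have hone : β j = 1 := hcoeff.resolve_right fun h => by
    linarith [nonneg_of_mem_posRoots hβ j]
  exact hne (by rwa [hone, one_smul] at hmultiple)

lemma act_s_apply_of_ne {i j : Fin n} (hij : i ≠ j) (x : Fin n → ℤ) :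
    c.act (c.s j) x i = x i := by
  rw [s, act_refl_eq_sub (c.sroot_mem j)]
  simp [sroot, hij]

lemma act_s_mem_posRoots (hβ : β ∈ c.posRoots) {j : Fin n} (hne : β ≠ c.sroot j) :
    c.act (c.s j) β ∈ c.posRoots := by
  obtain ⟨i, hij, hi⟩ := exists_ne_apply_pos_of_ne_sroot hβ hne
  exact mem_posRoots_of_apply_pos (c.act_mem _ β (mem_of_mem_posRoots hβ))
    (by rwa [act_s_apply_of_ne hij])

lemma act_s_ne_sroot (hβ : β ∈ c.posRoots) (j : Fin n) : c.act (c.s j) β ≠ c.sroot j := by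
  intro h
  have hneg : β = -c.sroot j := calc
    β = c.act (c.s j) (c.act (c.s j) β) := (act_refl_involutive (c.sroot_mem j) β).symm
    _ = c.act (c.s j) (c.sroot j) := by rw [h]
    _ = -c.sroot j := act_refl_self (c.sroot_mem j)
  simpa [hneg, sroot] using nonneg_of_mem_posRoots hβ j

end PosRoots

lemma pairTwoRho_eq_sum_posRoots (lam : Fin n → ℤ) :
    c.pairTwoRho lam = ∑ β ∈ c.posRoots, c.pair β lam :=
  (Finset.sum_filter _ _).symm

/-- The involution `s_j` of `R^+ \ {α_j}` negates the pairing with `α_j^∨`, so that only `α_j`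
contributes to the sum. -/
lemma pairTwoRho_cor_sroot (j : Fin n) : c.pairTwoRho (c.cor (c.sroot j)) = 2 := by
  have hcancel : ∑ β ∈ c.posRoots.erase (c.sroot j), c.pair β (c.cor (c.sroot j)) = 0 := by
    have hneg := pair_act_refl_cor (c.sroot_mem j)
    refine Finset.sum_involution (fun β _ => c.act (c.s j) β) (fun β _ => ?_)
      (fun β _ hβ0 hfix => hβ0 ?_) (fun β hβ => ?_)
      (fun β _ => act_refl_involutive (c.sroot_mem j) β)
    · rw [s, hneg, add_neg_cancel]
    · exact self_eq_neg.1 (by rw [← hneg, ← s, hfix])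
    · obtain ⟨hne, hβ⟩ := Finset.mem_erase.1 hβ
      exact Finset.mem_erase.2 ⟨act_s_ne_sroot hβ j, act_s_mem_posRoots hβ hne⟩
  rw [pairTwoRho_eq_sum_posRoots, ← Finset.add_sum_erase _ _ (c.sroot_mem_posRoots j), hcancel,
    pair_cor_self (c.sroot_mem j), add_zero]

variable {c} in
lemma pairTwoRho_cor_act_refl {γ β : Fin n → ℤ} (hγ : γ ∈ c.R) (hβ : β ∈ c.R) :
    c.pairTwoRho (c.cor (c.act (c.σ γ) β)) =
      c.pairTwoRho (c.cor β) - c.pair γ (c.cor β) * c.pairTwoRho (c.cor γ) := by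
  simp only [cor_act_refl hγ hβ, pairTwoRho_eq_sum_posRoots, ← pairing_apply, map_sub, map_smul,
    smul_eq_mul, Finset.sum_sub_distrib, Finset.mul_sum]

lemma pairTwoRho_cor_act_s (j : Fin n) {β : Fin n → ℤ} (hβ : β ∈ c.R) :
    c.pairTwoRho (c.cor (c.act (c.s j) β)) =
      c.pairTwoRho (c.cor β) - 2 * c.pair (c.sroot j) (c.cor β) := by
  rw [s, pairTwoRho_cor_act_refl (c.sroot_mem j) hβ, pairTwoRho_cor_sroot, mul_comm]

lemma len_prod_le (l : List (Fin n)) : c.len (l.map c.s).prod ≤ l.length :=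
  Nat.sInf_le ⟨l, rfl, rfl⟩

lemma exists_reduced_word (w : c.W) :
    ∃ l : List (Fin n), l.length = c.len w ∧ (l.map c.s).prod = w := by
  obtain ⟨l, hl⟩ := c.generated w
  exact Nat.sInf_mem (s := {k | ∃ l : List (Fin n), l.length = k ∧ (l.map c.s).prod = w})
    ⟨l.length, l, rfl, hl.symm⟩

lemma len_mul_le (v w : c.W) : c.len (v * w) ≤ c.len v + c.len w := by
  obtain ⟨l, hl, hlv⟩ := c.exists_reduced_word v
  obtain ⟨m, hm, hmw⟩ := c.exists_reduced_word w
  calc c.len (v * w) = c.len ((l ++ m).map c.s).prod := by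
        rw [List.map_append, List.prod_append, hlv, hmw]
    _ ≤ (l ++ m).length := c.len_prod_le _
    _ = c.len v + c.len w := by rw [List.length_append, hl, hm]

lemma len_s_le_one (j : Fin n) : c.len (c.s j) ≤ 1 := by
  simpa only [List.map_singleton, List.prod_singleton, List.length_singleton]
    using c.len_prod_le [j]

lemma len_refl_le_len_refl_act_s_add_two (j : Fin n) {β : Fin n → ℤ} (hβ : β ∈ c.R) :
    c.len (c.σ β) ≤ c.len (c.σ (c.act (c.s j) β)) + 2 := by
  set w := c.σ (c.act (c.s j) β)
  calc c.len (c.σ β) = c.len (c.s j * w * c.s j) :=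
        congrArg c.len (refl_eq_conj (c.sroot_mem j) hβ)
    _ ≤ c.len (c.s j) + c.len w + c.len (c.s j) :=
        (c.len_mul_le _ _).trans (Nat.add_le_add_right (c.len_mul_le _ _) _)
    _ ≤ c.len w + 2 := by have := c.len_s_le_one j; omega

section Descent

variable {c}

/-- The height of the coroot `γ^∨`. -/
def coheight (c : RootSystemData n) (γ : Fin n → ℤ) : ℤ := ∑ i, c.cor γ i

lemma coheight_act_s (j : Fin n) {β : Fin n → ℤ} (hβ : β ∈ c.R) :
    c.coheight (c.act (c.s j) β) = c.coheight β - c.pair (c.sroot j) (c.cor β) := by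
  simp [coheight, s, cor_act_refl (c.sroot_mem j) hβ, cor_sroot, Finset.sum_sub_distrib,
    ← Finset.mul_sum]

/-- `coheight` decreases along `s_j`; as coroots of positive roots are not yet known to be
nonnegative, the descent terminates because `R^+` is finite. -/
lemma posRoots_induction {P : (Fin n → ℤ) → Prop} (simple : ∀ j, P (c.sroot j))
    (step : ∀ β ∈ c.posRoots, ∀ j, 0 < c.pair (c.sroot j) (c.cor β) →
      P (c.act (c.s j) β) → P β)
    {β : Fin n → ℤ} (hβ : β ∈ c.posRoots) : P β := by
  have hwf : (c.posRoots : Set (Fin n → ℤ)).WellFoundedOn (Order.Preimage c.coheight (· < ·)) :=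
    c.posRoots.wellFoundedOn
  refine hwf.induction hβ fun δ hδ ih => ?_
  have hδR := mem_of_mem_posRoots hδ
  obtain ⟨j, hj⟩ := c.exists_pair_sroot_pos (nonneg_of_mem_posRoots hδ)
    (pair_cor_self hδR ▸ two_pos)
  obtain rfl | hne := eq_or_ne δ (c.sroot j)
  · exact simple j
  · refine step δ hδ j hj (ih _ (act_s_mem_posRoots hδ hne) ?_)
    rw [Order.Preimage, coheight_act_s j hδR]
    exact sub_lt_self _ hj

lemma len_refl_le {β : Fin n → ℤ} (hβ : β ∈ c.posRoots) :
    (c.len (c.σ β) : ℤ) ≤ c.pairTwoRho (c.cor β) - 1 := by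
  refine posRoots_induction
    (P := fun β => (c.len (c.σ β) : ℤ) ≤ c.pairTwoRho (c.cor β) - 1)
    (fun j => ?_) (fun δ hδ j hj ih => ?_) hβ
  · have hlen : c.len (c.σ (c.sroot j)) ≤ 1 := c.len_s_le_one j
    rw [pairTwoRho_cor_sroot]
    omega
  · have hδR := mem_of_mem_posRoots hδ
    have hlen := c.len_refl_le_len_refl_act_s_add_two j hδR
    rw [c.pairTwoRho_cor_act_s j hδR] at ih
    omega

end Descent

end RootSystemData

/-- Let `γ ∈ R^+ \ Δ` satisfy `ℓ(s_γ) = ⟨2ρ, γ^∨⟩ - 1`.  Then for every simple index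
`j` with `⟨α_j, γ^∨⟩ > 0` one has `⟨α_j, γ^∨⟩ = 1`; and for `β := s_j(γ)`,
`β^∨ = γ^∨ - α_j^∨` and `ℓ(s_β) = ℓ(s_γ) - 2 = ⟨2ρ, β^∨⟩ - 1`. -/
theorem reflection_length_descent {n : ℕ} (c : RootSystemData n)
    (γ : Fin n → ℤ) (hγR : γ ∈ c.R) (hγpos : ∀ i, 0 ≤ γ i)
    (hγns : ∀ i : Fin n, γ ≠ c.sroot i)
    (hlen : (c.len (c.σ γ) : ℤ) = c.pairTwoRho (c.cor γ) - 1)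
    (j : Fin n) (hj : 0 < c.pair (c.sroot j) (c.cor γ)) :
    c.pair (c.sroot j) (c.cor γ) = 1 ∧
    c.cor (c.act (c.s j) γ) = c.cor γ - Pi.single j 1 ∧
    c.len (c.σ (c.act (c.s j) γ)) + 2 = c.len (c.σ γ) ∧
    (c.len (c.σ (c.act (c.s j) γ)) : ℤ) = c.pairTwoRho (c.cor (c.act (c.s j) γ)) - 1 := by
  have hβ := RootSystemData.len_refl_le <|
    RootSystemData.act_s_mem_posRoots (RootSystemData.mem_posRoots.2 ⟨hγR, hγpos⟩) (hγns j)
  have hconj := c.len_refl_le_len_refl_act_s_add_two j hγR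
  have hrho := c.pairTwoRho_cor_act_s j hγR
  have hk : c.pair (c.sroot j) (c.cor γ) = 1 := by omega
  refine ⟨hk, ?_, by omega, by omega⟩
  rw [RootSystemData.s, RootSystemData.cor_act_refl (c.sroot_mem j) hγR, hk, one_smul, c.cor_sroot]
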